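/- arXiv:2605.08481 — 4 statements merged into one kernel-verified Lean document; each statement's English description precedes it below -/
import Mathlib

section
/- Let $P$ denote the set of functions $u : \mathbb{R}^2 \to \mathbb{C}$ that are $2\pi\mathbb{Z}^2$-periodic, i.e. $u(x_1 + 2\pi, x_2) = u(x_1, x_2 + 2\pi) = u(x_1,x_2)$ for all $(x_1,x_2)$. Define $(S_0 u)(x_1,x_2) := e^{i x_2} u(x_1 + \pi, -x_2)$ and $(S_1 u)(x_1,x_2) := e^{i(x_1 + x_2)} u(-x_1, -x_2)$. Then $S_0$ and $S_1$ map $P$ into $P$, and on $P$ one has $S_0^2 = \mathrm{id}$, $S_1^2 = \mathrm{id}$, and $S_1 S_0 = -S_0 S_1$. -/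
open Real

/-- The set of `2πℤ²`-periodic functions on `ℝ²`. -/
def PeriodicFuns : Set (ℝ × ℝ → ℂ) :=
  {u | ∀ x1 x2 : ℝ, u (x1 + 2 * Real.pi, x2) = u (x1, x2) ∧
        u (x1, x2 + 2 * Real.pi) = u (x1, x2)}

/-- `(S₀ u)(x₁,x₂) = e^{i x₂} u(x₁+π, -x₂)`. -/
noncomputable def S0Op (u : ℝ × ℝ → ℂ) : ℝ × ℝ → ℂ :=
  fun x => Complex.exp (Complex.I * (x.2 : ℂ)) * u (x.1 + Real.pi, -x.2)

/-- `(S₁ u)(x₁,x₂) = e^{i (x₁+x₂)} u(-x₁, -x₂)`. -/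
noncomputable def S1Op (u : ℝ × ℝ → ℂ) : ℝ × ℝ → ℂ :=
  fun x => Complex.exp (Complex.I * ((x.1 : ℂ) + (x.2 : ℂ))) * u (-x.1, -x.2)

/-!
Write `T` for the translation `(T u) x = u (x + (2π, 0))`. On all functions, periodic or not,
`S₀² = T` and `S₁ S₀ = -S₀ S₁ T`: the sign is `e^{iπ}`, picked up because `S₀` shifts the argument
of the phase `e^{i (x₁ + x₂)}` of `S₁` by `π`. On periodic functions `T` is the identity.
-/

lemma mem_periodicFuns_iff {u : ℝ × ℝ → ℂ} :
    u ∈ PeriodicFuns ↔ Function.Periodic u (2 * π, 0) ∧ Function.Periodic u (0, 2 * π) := by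
  simp only [PeriodicFuns, Set.mem_ofPred_eq, Function.Periodic, Prod.forall, Prod.mk_add_mk,
    add_zero, forall_and]

lemma periodic_S0Op {u : ℝ × ℝ → ℂ} {a b : ℝ} (hb : Complex.exp (Complex.I * b) = 1)
    (hu : Function.Periodic u (a, -b)) : Function.Periodic (S0Op u) (a, b) := by
  rintro ⟨x₁, x₂⟩
  have phase : Complex.exp (Complex.I * ((x₂ + b : ℝ) : ℂ)) = Complex.exp (Complex.I * x₂) := by
    rw [Complex.ofReal_add, mul_add, Complex.exp_add, hb, mul_one]
  have shift : u (x₁ + a + π, -(x₂ + b)) = u (x₁ + π, -x₂) := by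
    rw [← hu (x₁ + π, -x₂), Prod.mk_add_mk, add_right_comm, neg_add]
  simp only [S0Op, Prod.mk_add_mk, phase, shift]

lemma periodic_S1Op {u : ℝ × ℝ → ℂ} {a b : ℝ} (hab : Complex.exp (Complex.I * (a + b)) = 1)
    (hu : Function.Periodic u (a, b)) : Function.Periodic (S1Op u) (a, b) := by
  rintro ⟨x₁, x₂⟩
  have phase : Complex.exp (Complex.I * (((x₁ + a : ℝ) : ℂ) + ((x₂ + b : ℝ) : ℂ))) =
      Complex.exp (Complex.I * (x₁ + x₂)) := by
    rw [Complex.ofReal_add, Complex.ofReal_add, add_add_add_comm, mul_add, Complex.exp_add, hab,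
      mul_one]
  have shift : u (-(x₁ + a), -(x₂ + b)) = u (-x₁, -x₂) := by
    rw [← hu.neg (-x₁, -x₂), Prod.neg_mk, Prod.mk_add_mk, neg_add, neg_add]
  simp only [S1Op, Prod.mk_add_mk, phase, shift]

lemma exp_I_mul_two_pi : Complex.exp (Complex.I * (2 * π : ℝ)) = 1 := by
  rw [mul_comm]
  exact_mod_cast Complex.exp_two_pi_mul_I

lemma S0Op_mem_periodicFuns {u : ℝ × ℝ → ℂ} (hu : u ∈ PeriodicFuns) :
    S0Op u ∈ PeriodicFuns := by
  obtain ⟨h₁, h₂⟩ := mem_periodicFuns_iff.mp hu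
  refine mem_periodicFuns_iff.mpr ⟨periodic_S0Op (by simp) ?_,
    periodic_S0Op exp_I_mul_two_pi ?_⟩
  · rwa [neg_zero]
  · simpa only [Prod.neg_mk, neg_zero] using h₂.neg

lemma S1Op_mem_periodicFuns {u : ℝ × ℝ → ℂ} (hu : u ∈ PeriodicFuns) :
    S1Op u ∈ PeriodicFuns := by
  obtain ⟨h₁, h₂⟩ := mem_periodicFuns_iff.mp hu
  refine mem_periodicFuns_iff.mpr ⟨periodic_S1Op ?_ h₁, periodic_S1Op ?_ h₂⟩
  · rw [Complex.ofReal_zero, add_zero, exp_I_mul_two_pi]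
  · rw [Complex.ofReal_zero, zero_add, exp_I_mul_two_pi]

lemma S0Op_S0Op (u : ℝ × ℝ → ℂ) : S0Op (S0Op u) = fun x ↦ u (x + (2 * π, 0)) := by
  funext ⟨x₁, x₂⟩
  simp only [S0Op, Prod.mk_add_mk, add_zero, neg_neg, add_assoc, ← two_mul, ← mul_assoc,
    ← Complex.exp_add, Complex.ofReal_neg, mul_neg, add_neg_cancel, Complex.exp_zero, one_mul]

lemma S1Op_involutive : Function.Involutive S1Op := by
  intro u
  funext ⟨x₁, x₂⟩
  simp only [S1Op, neg_neg, ← mul_assoc, ← Complex.exp_add, ← mul_add, Complex.ofReal_neg,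
    ← neg_add, add_neg_cancel, mul_zero, Complex.exp_zero, one_mul]

lemma S1Op_S0Op (u : ℝ × ℝ → ℂ) :
    S1Op (S0Op u) = -S0Op (S1Op fun x ↦ u (x + (2 * π, 0))) := by
  funext ⟨x₁, x₂⟩
  have phase_S1_S0 : Complex.exp (Complex.I * (x₁ + x₂)) * Complex.exp (Complex.I * (-x₂ : ℝ)) =
      Complex.exp (Complex.I * x₁) := by
    rw [← Complex.exp_add]
    push_cast
    ring_nf
  have phase_S0_S1 : Complex.exp (Complex.I * x₂) *
      Complex.exp (Complex.I * ((x₁ + π : ℝ) + (-x₂ : ℝ))) = -Complex.exp (Complex.I * x₁) := by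
    rw [← Complex.exp_add, ← Complex.exp_add_pi_mul_I]
    push_cast
    ring_nf
  have shift : -(x₁ + π) + 2 * π = -x₁ + π := by ring
  simp only [S0Op, S1Op, Pi.neg_apply, Prod.mk_add_mk, add_zero, neg_neg, ← mul_assoc,
    phase_S1_S0, phase_S0_S1, shift, neg_mul]

/-- The symmetries `S₀`, `S₁` preserve the space of `2πℤ²`-periodic functions,
are involutions on it, and anticommute: `S₁ S₀ = -S₀ S₁`. -/
theorem S0_S1_involutions_anticommute (u : ℝ × ℝ → ℂ) (hu : u ∈ PeriodicFuns) :
    S0Op u ∈ PeriodicFuns ∧ S1Op u ∈ PeriodicFuns ∧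
    S0Op (S0Op u) = u ∧ S1Op (S1Op u) = u ∧
    S1Op (S0Op u) = -(S0Op (S1Op u)) := by
  have translate : (fun x ↦ u (x + (2 * π, 0))) = u := (mem_periodicFuns_iff.mp hu).1.funext
  refine ⟨S0Op_mem_periodicFuns hu, S1Op_mem_periodicFuns hu, ?_, S1Op_involutive u, ?_⟩
  · rw [S0Op_S0Op, translate]
  · rw [S1Op_S0Op, translate]
end

section
/- Let $\gamma \in \mathbb{R}$ and set $K := \lceil 4|\gamma| \rceil + 1$. Define $\epsilon^0_{2a-1}(\kappa) := (a-1+\kappa)^2$, $\epsilon^0_{2a}(\kappa) := (a-\kappa)^2$ for $a \in \mathbb{N}_+$. Suppose that for each $j \in \mathbb{N}_+$, $\epsilon_j : [0, 1/2] \to \mathbb{R}$ is continuous and satisfies $|\epsilon_j(\kappa) - \epsilon^0_j(\kappa)| \le |\gamma|$ for all $\kappa \in [0,1/2]$. Then for all integers $m, n$ with $\min(m-1, n) \ge K$ there exists $k = (k_1, k_2) \in [0, 1/2]^2$ such that $$\epsilon_m(k_1) + \epsilon_n(k_2) = \epsilon_{m-1}(k_1) + \epsilon_{n+1}(k_2).$$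 -/
open Real

/-- The `j`-th eigenvalue of the free 1D Bloch operator `(D_t - κ)²`:
`ε⁰_{2a-1}(κ) = (a-1+κ)²`, `ε⁰_{2a}(κ) = (a-κ)²`. -/
noncomputable def eps0 (j : ℕ) (κ : ℝ) : ℝ :=
  if j % 2 = 1 then ((((j + 1) / 2 : ℕ) : ℝ) - 1 + κ) ^ 2
  else (((j / 2 : ℕ) : ℝ) - κ) ^ 2

/-!
An intersection of the bands `E_{p+1,n}` and `E_{p,n+1}` is a common value of the gaps
`ε_{p+1} - ε_p` (in `k₁`) and `ε_{n+1} - ε_n` (in `k₂`). The free gap of index `p` sweeps out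
`[0, p]`, so a gap perturbed by at most `2δ` comes down to `2δ` and up to `p - 2δ`. When the
indices are large against the perturbations, each of the two gaps therefore exceeds the other
somewhere on the Brillouin zone, and connectedness makes them agree.
-/

section CommonValue

variable {X Y α : Type*} [TopologicalSpace X] [TopologicalSpace Y] [LinearOrder α]
  [TopologicalSpace α] [OrderClosedTopology α] {s : Set X} {t : Set Y} {f : X → α} {g : Y → α}

lemma exists_eq_of_exists_le_of_exists_ge (hs : IsPreconnected s) (ht : IsPreconnected t)
    (hf : ContinuousOn f s) (hg : ContinuousOn g t) (hle : ∃ x ∈ s, ∃ y ∈ t, f x ≤ g y)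
    (hge : ∃ x ∈ s, ∃ y ∈ t, g y ≤ f x) : ∃ x ∈ s, ∃ y ∈ t, f x = g y := by
  obtain ⟨x₀, hx₀, y₀, hy₀, h₀⟩ := hle
  obtain ⟨x₁, hx₁, y₁, hy₁, h₁⟩ := hge
  obtain ⟨⟨x, y⟩, ⟨hx, hy⟩, hxy⟩ := (hs.prod ht).intermediate_value₂
    (Set.mk_mem_prod hx₀ hy₀) (Set.mk_mem_prod hx₁ hy₁)
    (hf.comp continuousOn_fst fun _ h ↦ h.1) (hg.comp continuousOn_snd fun _ h ↦ h.2) h₀ h₁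
  exact ⟨x, hx, y, hy, hxy⟩

end CommonValue

/-- The distance `ε_{p+1}(κ) - ε_p(κ)` between two consecutive bands of the family `ε`. -/
def bandGap (ε : ℕ → ℝ → ℝ) (p : ℕ) (κ : ℝ) : ℝ :=
  ε (p + 1) κ - ε p κ

section FreeBands

lemma eps0_two_mul (a : ℕ) (κ : ℝ) : eps0 (2 * a) κ = (a - κ) ^ 2 := by
  simp [eps0]

lemma eps0_two_mul_add_one (a : ℕ) (κ : ℝ) : eps0 (2 * a + 1) κ = (a + κ) ^ 2 := by
  have hhalf : (2 * a + 1 + 1) / 2 = a + 1 := by omega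
  simp [eps0, Nat.add_mod, hhalf]

lemma bandGap_eps0_of_even {p : ℕ} (hp : Even p) (κ : ℝ) : bandGap eps0 p κ = 2 * p * κ := by
  obtain ⟨a, rfl⟩ := hp.exists_two_nsmul
  rw [smul_eq_mul, bandGap, eps0_two_mul_add_one, eps0_two_mul]
  push_cast
  ring

lemma bandGap_eps0_of_odd {p : ℕ} (hp : Odd p) (κ : ℝ) :
    bandGap eps0 p κ = p * (1 - 2 * κ) := by
  obtain ⟨a, rfl⟩ := hp
  rw [bandGap, show 2 * a + 1 + 1 = 2 * (a + 1) by ring, eps0_two_mul, eps0_two_mul_add_one]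
  push_cast
  ring

lemma exists_bandGap_eps0_eq_zero (p : ℕ) :
    ∃ κ ∈ Set.Icc (0 : ℝ) (1 / 2), bandGap eps0 p κ = 0 := by
  rcases p.even_or_odd with hp | hp
  · exact ⟨0, by norm_num, by simp [bandGap_eps0_of_even hp]⟩
  · exact ⟨1 / 2, by norm_num, by simp [bandGap_eps0_of_odd hp]⟩

lemma exists_bandGap_eps0_eq_index (p : ℕ) :
    ∃ κ ∈ Set.Icc (0 : ℝ) (1 / 2), bandGap eps0 p κ = p := by
  rcases p.even_or_odd with hp | hp
  · exact ⟨1 / 2, by norm_num, by rw [bandGap_eps0_of_even hp]; ring⟩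
  · exact ⟨0, by norm_num, by simp [bandGap_eps0_of_odd hp]⟩

end FreeBands

/-- A family of continuous bands on `[0, 1/2]` lying within `δ` of the free bands `eps0`.
Bands are numbered from `1`, so nothing is required of `ε 0`. -/
structure IsBandPerturbation (δ : ℝ) (ε : ℕ → ℝ → ℝ) : Prop where
  continuousOn : ∀ j : ℕ, 1 ≤ j → ContinuousOn (ε j) (Set.Icc (0 : ℝ) (1 / 2))
  abs_sub_le : ∀ j : ℕ, 1 ≤ j → ∀ κ ∈ Set.Icc (0 : ℝ) (1 / 2), |ε j κ - eps0 j κ| ≤ δ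

namespace IsBandPerturbation

variable {δ : ℝ} {ε : ℕ → ℝ → ℝ} {p : ℕ}

lemma continuousOn_bandGap (hε : IsBandPerturbation δ ε) (hp : 1 ≤ p) :
    ContinuousOn (bandGap ε p) (Set.Icc (0 : ℝ) (1 / 2)) :=
  (hε.continuousOn (p + 1) (by omega)).sub (hε.continuousOn p hp)

lemma abs_bandGap_sub_le (hε : IsBandPerturbation δ ε) (hp : 1 ≤ p) {κ : ℝ}
    (hκ : κ ∈ Set.Icc (0 : ℝ) (1 / 2)) : |bandGap ε p κ - bandGap eps0 p κ| ≤ 2 * δ :=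
  calc |bandGap ε p κ - bandGap eps0 p κ|
      = |(ε (p + 1) κ - eps0 (p + 1) κ) - (ε p κ - eps0 p κ)| := by
        rw [bandGap, bandGap, sub_sub_sub_comm]
    _ ≤ |ε (p + 1) κ - eps0 (p + 1) κ| + |ε p κ - eps0 p κ| := abs_sub _ _
    _ ≤ δ + δ := add_le_add (hε.abs_sub_le (p + 1) (by omega) κ hκ) (hε.abs_sub_le p hp κ hκ)
    _ = 2 * δ := (two_mul δ).symm

lemma exists_bandGap_le (hε : IsBandPerturbation δ ε) (hp : 1 ≤ p) :
    ∃ κ ∈ Set.Icc (0 : ℝ) (1 / 2), bandGap ε p κ ≤ 2 * δ := by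
  obtain ⟨κ, hκ, hfree⟩ := exists_bandGap_eps0_eq_zero p
  have hclose := abs_le.1 (hε.abs_bandGap_sub_le hp hκ)
  exact ⟨κ, hκ, by linarith⟩

lemma exists_le_bandGap (hε : IsBandPerturbation δ ε) (hp : 1 ≤ p) :
    ∃ κ ∈ Set.Icc (0 : ℝ) (1 / 2), p - 2 * δ ≤ bandGap ε p κ := by
  obtain ⟨κ, hκ, hfree⟩ := exists_bandGap_eps0_eq_index p
  have hclose := abs_le.1 (hε.abs_bandGap_sub_le hp hκ)
  exact ⟨κ, hκ, by linarith⟩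

lemma exists_bandGap_le_bandGap {δ' : ℝ} {ε' : ℕ → ℝ → ℝ} {n : ℕ} (hε : IsBandPerturbation δ ε)
    (hε' : IsBandPerturbation δ' ε') (hp : 1 ≤ p) (hn : 1 ≤ n) (hnδ : 2 * (δ + δ') ≤ n) :
    ∃ k1 ∈ Set.Icc (0 : ℝ) (1 / 2), ∃ k2 ∈ Set.Icc (0 : ℝ) (1 / 2),
      bandGap ε p k1 ≤ bandGap ε' n k2 := by
  obtain ⟨k1, hk1, hlow⟩ := hε.exists_bandGap_le hp
  obtain ⟨k2, hk2, hhigh⟩ := hε'.exists_le_bandGap hn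
  exact ⟨k1, hk1, k2, hk2, by linarith⟩

end IsBandPerturbation

/-- Two different families are allowed: they are the bands of a separable potential
`V₁(x₁) + V₂(x₂)`. -/
theorem adjacent_bands_intersect_general {δ δ' : ℝ} {ε ε' : ℕ → ℝ → ℝ}
    (hε : IsBandPerturbation δ ε) (hε' : IsBandPerturbation δ' ε') {p n : ℕ} (hp : 1 ≤ p)
    (hn : 1 ≤ n) (hpδ : 2 * (δ + δ') ≤ p) (hnδ : 2 * (δ + δ') ≤ n) :
    ∃ k1 ∈ Set.Icc (0 : ℝ) (1 / 2), ∃ k2 ∈ Set.Icc (0 : ℝ) (1 / 2),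
      ε (p + 1) k1 + ε' n k2 = ε p k1 + ε' (n + 1) k2 := by
  obtain ⟨k2, hk2, k1, hk1, hge⟩ :=
    hε'.exists_bandGap_le_bandGap hε hn hp (by rwa [add_comm δ'])
  obtain ⟨k1, hk1, k2, hk2, hgap⟩ := exists_eq_of_exists_le_of_exists_ge
    isPreconnected_Icc isPreconnected_Icc
    (hε.continuousOn_bandGap hp) (hε'.continuousOn_bandGap hn)
    (hε.exists_bandGap_le_bandGap hε' hp hn hnδ) ⟨k1, hk1, k2, hk2, hge⟩
  rw [bandGap, bandGap] at hgap
  exact ⟨k1, hk1, k2, hk2, by linarith⟩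

/-- If each perturbed band `ε_j` is continuous on `[0,1/2]` and within `|γ|`
of the free band `ε⁰_j`, then for `min(m-1, n) ≥ K := ⌈4|γ|⌉ + 1` the 2D
bands `E_{m,n}` and `E_{m-1,n+1}` intersect somewhere on `[0,1/2]²`. -/
theorem adjacent_bands_intersect (γ : ℝ) (eps : ℕ → ℝ → ℝ)
    (hcont : ∀ j : ℕ, 1 ≤ j → ContinuousOn (eps j) (Set.Icc (0 : ℝ) (1 / 2)))
    (hbound : ∀ j : ℕ, 1 ≤ j → ∀ κ ∈ Set.Icc (0 : ℝ) (1 / 2),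
      |eps j κ - eps0 j κ| ≤ |γ|)
    (m n : ℕ) (hmn : ⌈4 * |γ|⌉₊ + 1 ≤ min (m - 1) n) :
    ∃ k1 ∈ Set.Icc (0 : ℝ) (1 / 2), ∃ k2 ∈ Set.Icc (0 : ℝ) (1 / 2),
      eps m k1 + eps n k2 = eps (m - 1) k1 + eps (n + 1) k2 := by
  obtain ⟨p, rfl⟩ : ∃ p, m = p + 1 := ⟨m - 1, by omega⟩
  have hγ {j : ℕ} (hj : ⌈4 * |γ|⌉₊ ≤ j) : 2 * (|γ| + |γ|) ≤ j := by linarith [Nat.ceil_le.1 hj]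
  exact adjacent_bands_intersect_general ⟨hcont, hbound⟩ ⟨hcont, hbound⟩ (by omega) (by omega)
    (hγ (by omega)) (hγ (by omega))
end

section
/- Let $\gamma \in \mathbb{R}$. Define $\epsilon^0_{2a-1}(\kappa) := (a-1+\kappa)^2$, $\epsilon^0_{2a}(\kappa) := (a-\kappa)^2$ for $a \in \mathbb{N}_+$. Suppose that for each $j \in \mathbb{N}_+$, $\epsilon_j : [0, 1/2] \to \mathbb{R}$ is continuous and satisfies $|\epsilon_j(\kappa) - \epsilon^0_j(\kappa)| \le |\gamma|$ for all $\kappa \in [0,1/2]$, and set $E_{m,n}(k) := \epsilon_m(k_1) + \epsilon_n(k_2)$ for $(m,n) \in \mathbb{N}_+^2$, $k \in [0,1/2]^2$. If $(m,n) \in \mathbb{N}_+^2$ satisfies $m + n \ge 8\lceil 4|\gamma| \rceil + 12$, then there exist pairwise distinct pairs $(m_j, n_j) \in \mathbb{N}_+^2$, $j \ge 0$, with $(m_0, n_0) = (m, n)$, such that for every $j \ge 0$ there is $k_j \in [0,1/2]^2$ with $E_{m_j, n_j}(k_j) = E_{m_{j+1}, n_{j+1}}(k_j)$. -/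
open Real

/-!
At the endpoints of `[0, 1/2]` the free band `ε⁰_j` takes the values `(j - 1)² / 4` and `j² / 4`,
at the same or at opposite endpoints for two indices according to whether their parities agree.
By the intermediate value theorem two bands whose indices differ in parity in both coordinates
intersect as soon as their free energy ranges overlap by a margin absorbing the perturbation.
With `L = ⌈4δ⌉`, where `δ` bounds the perturbation, this allows the antidiagonal step
`(m + 1, n) → (m, n + 1)` for `m, n ≥ L`, and the jump `(m, n + 1) → (m + 2s + 1, n)` for suitable
`s ≥ 1` when `m ≤ L + 1` and `n` is large. Neither decreases `m + n`, so, after exchanging the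
coordinates if `n < L` at the start, one of the two always remains available. Both strictly increase
`m + 2n`, so no band is visited twice.
-/

theorem exists_injective_seq_of_forall_exists_lt {α β : Type*} [Preorder β] {S : Set α}
    {r : α → α → Prop} (rank : α → β)
    (step : ∀ a ∈ S, ∃ b ∈ S, r a b ∧ rank a < rank b) {a : α} (ha : a ∈ S) :
    ∃ f : ℕ → α, Function.Injective f ∧ f 0 = a ∧ (∀ j, f j ∈ S) ∧ ∀ j, r (f j) (f (j + 1)) := by
  choose! next next_mem next_rel rank_lt using step
  have mem (j : ℕ) : next^[j] a ∈ S := Set.MapsTo.iterate next_mem j ha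
  have rank_strictMono : StrictMono fun j => rank (next^[j] a) :=
    strictMono_nat_of_lt_succ fun j => by
      simpa only [Function.iterate_succ_apply'] using rank_lt _ (mem j)
  refine ⟨fun j => next^[j] a, rank_strictMono.injective.of_comp (f := rank), rfl, mem, fun j => ?_⟩
  simpa only [Function.iterate_succ_apply'] using next_rel _ (mem j)

/-- The endpoint of `[0, 1/2]` at which the free band `ε⁰_j` is minimal. -/
noncomputable def bandArgmin (j : ℕ) : ℝ := if Odd j then 0 else 1 / 2

theorem bandArgmin_mem_endpoints (j : ℕ) : bandArgmin j ∈ ({0, 1 / 2} : Set ℝ) := by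
  unfold bandArgmin
  split_ifs <;> simp

theorem endpoints_subset_Icc : ({0, 1 / 2} : Set ℝ) ⊆ Set.Icc 0 (1 / 2) := by
  rintro κ (rfl | rfl) <;> norm_num

theorem eps0_of_odd {j : ℕ} (hj : Odd j) (κ : ℝ) : eps0 j κ = ((j - 1) / 2 + κ) ^ 2 := by
  obtain ⟨a, rfl⟩ := hj
  rw [eps0, if_pos (by omega), show (2 * a + 1 + 1) / 2 = a + 1 by omega]
  push_cast
  ring

theorem eps0_of_even {j : ℕ} (hj : Even j) (κ : ℝ) : eps0 j κ = (j / 2 - κ) ^ 2 := by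
  obtain ⟨a, rfl⟩ := hj
  rw [eps0, if_neg (by omega), show (a + a) / 2 = a by omega]
  push_cast
  ring

theorem eps0_bandArgmin_self (j : ℕ) : eps0 j (bandArgmin j) = ((j : ℝ) - 1) ^ 2 / 4 := by
  rcases Nat.even_or_odd j with hj | hj
  · rw [eps0_of_even hj, bandArgmin, if_neg (Nat.not_odd_iff_even.2 hj)]
    ring
  · rw [eps0_of_odd hj, bandArgmin, if_pos hj]
    ring

theorem eps0_bandArgmin_of_odd_add {i j : ℕ} (hij : Odd (i + j)) :
    eps0 i (bandArgmin j) = (i : ℝ) ^ 2 / 4 := by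
  rcases Nat.even_or_odd i with hi | hi
  · rw [eps0_of_even hi, bandArgmin, if_pos ((Nat.odd_add'.1 hij).2 hi)]
    ring
  · rw [eps0_of_odd hi, bandArgmin, if_neg (Nat.not_odd_iff_even.2 ((Nat.odd_add.1 hij).1 hi))]
    ring

/-- The two-dimensional bands `E_v` and `E_w`, where `E_{m,n}(k) = ε_m(k₁) + ε_n(k₂)`, take the
same value at some quasi-momentum `k ∈ [0, 1/2]²`. -/
def BandsIntersect (eps : ℕ → ℝ → ℝ) (v w : ℕ × ℕ) : Prop :=
  ∃ k1 ∈ Set.Icc (0 : ℝ) (1 / 2), ∃ k2 ∈ Set.Icc (0 : ℝ) (1 / 2),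
    eps v.1 k1 + eps v.2 k2 = eps w.1 k1 + eps w.2 k2

theorem BandsIntersect.swap {eps : ℕ → ℝ → ℝ} {v w : ℕ × ℕ} (h : BandsIntersect eps v w) :
    BandsIntersect eps v.swap w.swap := by
  obtain ⟨k1, hk1, k2, hk2, heq⟩ := h
  exact ⟨k2, hk2, k1, hk1, by simpa only [Prod.fst_swap, Prod.snd_swap, add_comm] using heq⟩

/-- The region of index pairs in which the chain is continued. Only the second index is required to
be at least `L`; pairs with a small second index are reached by exchanging the coordinates. -/
def chainRegion (L : ℕ) : Set (ℕ × ℕ) :=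
  {v | (1 ≤ v.1 ∧ 1 ≤ v.2) ∧ L ≤ v.2 ∧ 3 * L + 4 ≤ v.1 + v.2}

theorem mk_mem_chainRegion {L m n : ℕ} :
    (m, n) ∈ chainRegion L ↔ (1 ≤ m ∧ 1 ≤ n) ∧ L ≤ n ∧ 3 * L + 4 ≤ m + n :=
  Iff.rfl

theorem exists_jump_size {L m : ℕ} (hmL : m ≤ L + 1) :
    ∃ s, 1 ≤ s ∧ L ≤ (s + 1) * (m + s) ∧ s * (m + s) + m ≤ 2 * L + 3 := by
  -- The least `s` with `L + 2 ≤ (s + 1) * (m + s)` satisfies all three conditions.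
  have top_works : L + 2 ≤ (L + 2 - m + 1) * (m + (L + 2 - m)) := by
    rw [Nat.add_sub_cancel' (by omega)]
    exact Nat.le_mul_of_pos_left _ (Nat.succ_pos _)
  have hex : ∃ s, L + 2 ≤ (s + 1) * (m + s) := ⟨_, top_works⟩
  obtain ⟨s, hs, hmin⟩ : ∃ s, L + 2 ≤ (s + 1) * (m + s) ∧
      ∀ t, L + 2 ≤ (t + 1) * (m + t) → s ≤ t :=
    ⟨Nat.find hex, Nat.find_spec hex, fun _ => Nat.find_min' hex⟩
  have hs_le : s ≤ L + 2 - m := hmin _ top_works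
  obtain _ | t := s
  · omega
  have ht : (t + 1) * (m + t) < L + 2 := by
    by_contra! h
    exact absurd (hmin t h) (by omega)
  have succ_mul : (t + 1) * (m + (t + 1)) = (t + 1) * (m + t) + (t + 1) := by ring
  exact ⟨t + 1, by omega, by omega, by omega⟩

/-- A family of bands `ε_j`, `j ≥ 1`, continuous on `[0, 1/2]` and `δ`-close to the free bands
`ε⁰_j`. Closeness is only asked for at the endpoints of the interval. -/
structure IsPerturbedBandFamily (δ : ℝ) (eps : ℕ → ℝ → ℝ) : Prop where
  continuousOn : ∀ j : ℕ, 1 ≤ j → ContinuousOn (eps j) (Set.Icc (0 : ℝ) (1 / 2))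
  abs_sub_le : ∀ j : ℕ, 1 ≤ j → ∀ κ ∈ ({0, 1 / 2} : Set ℝ), |eps j κ - eps0 j κ| ≤ δ

section PerturbedBands

variable {δ : ℝ} {eps : ℕ → ℝ → ℝ}

theorem bandsIntersect_of_le_of_le
    (hcont : ∀ j : ℕ, 1 ≤ j → ContinuousOn (eps j) (Set.Icc (0 : ℝ) (1 / 2)))
    {v w : ℕ × ℕ} (hv : 1 ≤ v.1 ∧ 1 ≤ v.2) (hw : 1 ≤ w.1 ∧ 1 ≤ w.2) {k l : ℝ × ℝ}
    (hk : k ∈ Set.Icc (0 : ℝ) (1 / 2) ×ˢ Set.Icc (0 : ℝ) (1 / 2))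
    (hl : l ∈ Set.Icc (0 : ℝ) (1 / 2) ×ˢ Set.Icc (0 : ℝ) (1 / 2))
    (hle : eps v.1 k.1 + eps v.2 k.2 ≤ eps w.1 k.1 + eps w.2 k.2)
    (hge : eps w.1 l.1 + eps w.2 l.2 ≤ eps v.1 l.1 + eps v.2 l.2) :
    BandsIntersect eps v w := by
  have band_cont {u : ℕ × ℕ} (hu : 1 ≤ u.1 ∧ 1 ≤ u.2) :
      ContinuousOn (fun k : ℝ × ℝ => eps u.1 k.1 + eps u.2 k.2)
        (Set.Icc (0 : ℝ) (1 / 2) ×ˢ Set.Icc (0 : ℝ) (1 / 2)) :=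
    ((hcont _ hu.1).comp continuousOn_fst fun _ h => h.1).add
      ((hcont _ hu.2).comp continuousOn_snd fun _ h => h.2)
  obtain ⟨q, hq, heq⟩ := (isPreconnected_Icc.prod isPreconnected_Icc).intermediate_value₂
    hk hl (band_cont hv) (band_cont hw) hle hge
  exact ⟨q.1, hq.1, q.2, hq.2, heq⟩

theorem abs_eps_add_eps_sub_le
    (hbound : ∀ j : ℕ, 1 ≤ j → ∀ κ ∈ ({0, 1 / 2} : Set ℝ), |eps j κ - eps0 j κ| ≤ δ)
    {v : ℕ × ℕ} (hv : 1 ≤ v.1 ∧ 1 ≤ v.2) (i j : ℕ) :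
    |eps v.1 (bandArgmin i) + eps v.2 (bandArgmin j) -
      (eps0 v.1 (bandArgmin i) + eps0 v.2 (bandArgmin j))| ≤ 2 * δ := by
  rw [add_sub_add_comm, two_mul]
  exact (abs_add_le _ _).trans <| add_le_add (hbound _ hv.1 _ (bandArgmin_mem_endpoints i))
    (hbound _ hv.2 _ (bandArgmin_mem_endpoints j))

theorem eps_add_eps_le_of_energy_le
    (hbound : ∀ j : ℕ, 1 ≤ j → ∀ κ ∈ ({0, 1 / 2} : Set ℝ), |eps j κ - eps0 j κ| ≤ δ)
    {v w : ℕ × ℕ} (hv : 1 ≤ v.1 ∧ 1 ≤ v.2) (hw : 1 ≤ w.1 ∧ 1 ≤ w.2)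
    (hodd₁ : Odd (w.1 + v.1)) (hodd₂ : Odd (w.2 + v.2))
    (henergy : ((v.1 : ℝ) - 1) ^ 2 + ((v.2 : ℝ) - 1) ^ 2 + 16 * δ ≤ (w.1 : ℝ) ^ 2 + (w.2 : ℝ) ^ 2) :
    eps v.1 (bandArgmin v.1) + eps v.2 (bandArgmin v.2) ≤
      eps w.1 (bandArgmin v.1) + eps w.2 (bandArgmin v.2) := by
  have upper := (abs_le.1 (abs_eps_add_eps_sub_le hbound hv v.1 v.2)).2
  have lower := (abs_le.1 (abs_eps_add_eps_sub_le hbound hw v.1 v.2)).1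
  rw [eps0_bandArgmin_self, eps0_bandArgmin_self] at upper
  rw [eps0_bandArgmin_of_odd_add hodd₁, eps0_bandArgmin_of_odd_add hodd₂] at lower
  linarith

theorem bandsIntersect_of_energy_le
    (heps : IsPerturbedBandFamily δ eps) {v w : ℕ × ℕ}
    (hv : 1 ≤ v.1 ∧ 1 ≤ v.2) (hw : 1 ≤ w.1 ∧ 1 ≤ w.2)
    (hodd₁ : Odd (v.1 + w.1)) (hodd₂ : Odd (v.2 + w.2))
    (hvw : ((v.1 : ℝ) - 1) ^ 2 + ((v.2 : ℝ) - 1) ^ 2 + 16 * δ ≤ (w.1 : ℝ) ^ 2 + (w.2 : ℝ) ^ 2)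
    (hwv : ((w.1 : ℝ) - 1) ^ 2 + ((w.2 : ℝ) - 1) ^ 2 + 16 * δ ≤ (v.1 : ℝ) ^ 2 + (v.2 : ℝ) ^ 2) :
    BandsIntersect eps v w :=
  have argmin_mem (u : ℕ × ℕ) : (bandArgmin u.1, bandArgmin u.2) ∈
      Set.Icc (0 : ℝ) (1 / 2) ×ˢ Set.Icc (0 : ℝ) (1 / 2) :=
    ⟨endpoints_subset_Icc (bandArgmin_mem_endpoints u.1),
      endpoints_subset_Icc (bandArgmin_mem_endpoints u.2)⟩
  bandsIntersect_of_le_of_le heps.continuousOn hv hw (argmin_mem v) (argmin_mem w)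
    (eps_add_eps_le_of_energy_le heps.abs_sub_le hv hw (by rwa [add_comm]) (by rwa [add_comm]) hvw)
    (eps_add_eps_le_of_energy_le heps.abs_sub_le hw hv hodd₁ hodd₂ hwv)

theorem bandsIntersect_antidiagonal
    (heps : IsPerturbedBandFamily δ eps) {m n : ℕ} (hm : 1 ≤ m) (hn : 1 ≤ n)
    (hδm : 4 * δ ≤ m) (hδn : 4 * δ ≤ n) :
    BandsIntersect eps (m + 1, n) (m, n + 1) := by
  refine bandsIntersect_of_energy_le heps ⟨by simp, hn⟩ ⟨hm, by simp⟩
    ⟨m, by ring⟩ ⟨n, by ring⟩ ?_ ?_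
  all_goals push_cast; linarith

theorem bandsIntersect_jump
    (heps : IsPerturbedBandFamily δ eps) {m n s : ℕ} (hm : 1 ≤ m) (hn : 1 ≤ n)
    (hδ : 4 * δ ≤ (s + 1) * (m + s)) (hδn : s * (m + s) + 4 * δ ≤ n) :
    BandsIntersect eps (m, n + 1) (m + 2 * s + 1, n) := by
  refine bandsIntersect_of_energy_le heps ⟨hm, by simp⟩ ⟨by simp, hn⟩
    ⟨m + s, by ring⟩ ⟨n, by ring⟩ ?_ ?_
  all_goals push_cast; linarith

theorem exists_bandsIntersect_mem_chainRegion
    (heps : IsPerturbedBandFamily δ eps) {L : ℕ} (hL : 4 * δ ≤ L)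
    {v : ℕ × ℕ} (hv : v ∈ chainRegion L) :
    ∃ w ∈ chainRegion L, BandsIntersect eps v w ∧ v.1 + 2 * v.2 < w.1 + 2 * w.2 := by
  obtain ⟨m, n⟩ := v
  obtain ⟨⟨hm, hn⟩, hLn, hsum⟩ := mk_mem_chainRegion.1 hv
  rcases le_or_gt m (L + 1) with hmL | hmL
  · obtain ⟨s, hs, hLs, hsm⟩ := exists_jump_size hmL
    obtain ⟨n, rfl⟩ := Nat.exists_eq_add_of_le' hn
    have hsn : s * (m + s) + L ≤ n := by omega
    have hLs' : (L : ℝ) ≤ (s + 1) * (m + s) := mod_cast hLs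
    have hsn' : (s * (m + s) + L : ℝ) ≤ n := mod_cast hsn
    exact ⟨(m + 2 * s + 1, n), mk_mem_chainRegion.2 (by omega),
      bandsIntersect_jump heps hm (by omega) (by linarith) (by linarith), by grind⟩
  · obtain ⟨m, rfl⟩ := Nat.exists_eq_add_of_le' hm
    have hLm : (L : ℝ) ≤ m := by exact_mod_cast (by omega : L ≤ m)
    have hLn' : (L : ℝ) ≤ n := mod_cast hLn
    exact ⟨(m, n + 1), mk_mem_chainRegion.2 (by omega),
      bandsIntersect_antidiagonal heps (by omega) hn (by linarith) (by linarith), by grind⟩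

theorem infinite_chain_of_intersections_general
    (heps : IsPerturbedBandFamily δ eps) {m n : ℕ} (hm : 1 ≤ m) (hn : 1 ≤ n)
    (hmn : 3 * ⌈4 * δ⌉₊ + 4 ≤ m + n) :
    ∃ f : ℕ → ℕ × ℕ, Function.Injective f ∧ f 0 = (m, n) ∧
      (∀ j : ℕ, 1 ≤ (f j).1 ∧ 1 ≤ (f j).2) ∧ ∀ j : ℕ, BandsIntersect eps (f j) (f (j + 1)) := by
  have chain_from {v : ℕ × ℕ} (hv : v ∈ chainRegion ⌈4 * δ⌉₊) :=
    exists_injective_seq_of_forall_exists_lt (fun u : ℕ × ℕ => u.1 + 2 * u.2)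
      (fun _ => exists_bandsIntersect_mem_chainRegion heps (Nat.le_ceil _)) hv
  rcases le_or_gt ⌈4 * δ⌉₊ n with hLn | hnL
  · obtain ⟨f, inj, start, mem, meets⟩ := chain_from (mk_mem_chainRegion.2 ⟨⟨hm, hn⟩, hLn, hmn⟩)
    exact ⟨f, inj, start, fun j => (mem j).1, meets⟩
  · obtain ⟨f, inj, start, mem, meets⟩ :=
      chain_from (v := (n, m)) (mk_mem_chainRegion.2 (by omega))
    exact ⟨Prod.swap ∘ f, Prod.swap_injective.comp inj, congrArg Prod.swap start,
      fun j => (mem j).1.symm, fun j => (meets j).swap⟩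

end PerturbedBands

/-- Proposition 5.2 of the paper: if each perturbed band `ε_j` is continuous
on `[0,1/2]` and within `|γ|` of the free band `ε⁰_j`, then every 2D band
`E_{m,n}(k) = ε_m(k₁) + ε_n(k₂)` with `m + n ≥ 8⌈4|γ|⌉ + 12` belongs to an
infinite chain of pairwise distinct bands, consecutive members of which
intersect somewhere on `[0,1/2]²`. -/
theorem infinite_chain_of_intersections (γ : ℝ) (eps : ℕ → ℝ → ℝ)
    (hcont : ∀ j : ℕ, 1 ≤ j → ContinuousOn (eps j) (Set.Icc (0 : ℝ) (1 / 2)))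
    (hbound : ∀ j : ℕ, 1 ≤ j → ∀ κ ∈ Set.Icc (0 : ℝ) (1 / 2),
      |eps j κ - eps0 j κ| ≤ |γ|)
    (m n : ℕ) (hm : 1 ≤ m) (hn : 1 ≤ n)
    (hmn : 8 * ⌈4 * |γ|⌉₊ + 12 ≤ m + n) :
    ∃ f : ℕ → ℕ × ℕ, Function.Injective f ∧ f 0 = (m, n) ∧
      (∀ j : ℕ, 1 ≤ (f j).1 ∧ 1 ≤ (f j).2) ∧
      ∀ j : ℕ, ∃ k1 ∈ Set.Icc (0 : ℝ) (1 / 2), ∃ k2 ∈ Set.Icc (0 : ℝ) (1 / 2),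
        eps (f j).1 k1 + eps (f j).2 k2
          = eps (f (j + 1)).1 k1 + eps (f (j + 1)).2 k2 := by
  exact infinite_chain_of_intersections_general
    ⟨hcont, fun j hj κ hκ => hbound j hj κ (endpoints_subset_Icc hκ)⟩ hm hn (by omega)
end

section
/- Let $k = (k_1, k_2) \in \mathbb{R}^2$, $B \in \mathbb{R}$, $\gamma \in \mathbb{R}$, let $\ell \in \mathbb{Z}$, and set $\kappa := (k_1 - \tfrac12, k_2 - \tfrac12)$, $\delta := B - (2\ell+1)\pi$. Let $M$ be the $4\times4$ Hermitian matrix $M := D + \tfrac{\gamma}{2} C$, where $D := \mathrm{diag}\big(k_1^2 + k_2^2,\ (1-k_1)^2 + k_2^2,\ k_1^2 + (1-k_2)^2,\ (1-k_1)^2 + (1-k_2)^2\big)$ and $$C := \begin{pmatrix} 0 & e^{iBk_2} & 1 & 0 \\ e^{-iBk_2} & 0 & 0 & 1 \\ 1 & 0 & 0 & e^{-iB(1-k_2)} \\ 0 & 1 & e^{iB(1-k_2)} & 0 \end{pmatrix}.$$ Then the eigenvalues of $M$, with multiplicity, are the four real numbers $$\tfrac12 + |\kappa|^2 + s_1 \sqrt{\,|\kappa|^2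 + \tfrac{\gamma^2}{2} + 2 s_2 \sqrt{\kappa_1^2 \kappa_2^2 + \tfrac{\gamma^2}{4}|\kappa|^2 + \tfrac{\gamma^4}{16}\sin^2(\tfrac{\delta}{2})}\,},\qquad s_1, s_2 \in \{+1, -1\},$$ where $|\kappa|^2 = \kappa_1^2 + \kappa_2^2$ (in particular, all four expressions under the square roots are nonnegative). -/
open Matrix Real

/-- The inner radicand `κ₁²κ₂² + (γ²/4)|κ|² + (γ⁴/16) sin²(δ/2)`. -/
noncomputable def innerRad (γ κ1 κ2 δ : ℝ) : ℝ :=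
  κ1 ^ 2 * κ2 ^ 2 + γ ^ 2 / 4 * (κ1 ^ 2 + κ2 ^ 2)
    + γ ^ 4 / 16 * (Real.sin (δ / 2)) ^ 2

/-- The four eigenvalue branches
`1/2 + |κ|² + s₁ √(|κ|² + γ²/2 + 2 s₂ √(innerRad))`, `s₁, s₂ ∈ {±1}`. -/
noncomputable def zEig (γ κ1 κ2 δ s1 s2 : ℝ) : ℝ :=
  1 / 2 + (κ1 ^ 2 + κ2 ^ 2)
    + s1 * Real.sqrt ((κ1 ^ 2 + κ2 ^ 2) + γ ^ 2 / 2
        + 2 * s2 * Real.sqrt (innerRad γ κ1 κ2 δ))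

/-- The diagonal part `D` of the Grushin effective matrix at quasimomentum `k`. -/
noncomputable def grushinD (k1 k2 : ℝ) : Matrix (Fin 4) (Fin 4) ℂ :=
  !![((k1 ^ 2 + k2 ^ 2 : ℝ) : ℂ), 0, 0, 0;
     0, (((1 - k1) ^ 2 + k2 ^ 2 : ℝ) : ℂ), 0, 0;
     0, 0, ((k1 ^ 2 + (1 - k2) ^ 2 : ℝ) : ℂ), 0;
     0, 0, 0, (((1 - k1) ^ 2 + (1 - k2) ^ 2 : ℝ) : ℂ)]

/-- The off-diagonal part `C` of the Grushin effective matrix. -/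
noncomputable def grushinC (B k2 : ℝ) : Matrix (Fin 4) (Fin 4) ℂ :=
  !![0, Complex.exp (Complex.I * (B : ℂ) * (k2 : ℂ)), 1, 0;
     Complex.exp (-Complex.I * (B : ℂ) * (k2 : ℂ)), 0, 0, 1;
     1, 0, 0, Complex.exp (-Complex.I * (B : ℂ) * ((1 : ℂ) - (k2 : ℂ)));
     0, 1, Complex.exp (Complex.I * (B : ℂ) * ((1 : ℂ) - (k2 : ℂ))), 0]

/-!
Ordering the basis as `(e₀₀, e₁₀), (e₀₁, e₁₁)` and subtracting `1/2 + |κ|²`, the matrix becomes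
`[[A₀ + κ₂, γ/2], [γ/2, A₁ - κ₂]]`, where `A₀` and `A₁` are traceless `2 × 2` matrices with
`A₀² = A₁² = κ₁² + γ²/4`. The off-diagonal blocks are scalar, so the characteristic determinant at
`w` collapses to that of the `2 × 2` matrix `(w - κ₂ - A₀)(w + κ₂ - A₁) - γ²/4`. It is a biquadratic
polynomial in `w` which depends on the phases of `A₀` and `A₁` only through `tr (A₀ A₁)`, that is,
through the cosine of their difference, the flux `B`. Completing the square and taking nested square
roots gives the four branches.
-/

section CommRing

variable {R n : Type*} [CommRing R] [Fintype n] [DecidableEq n]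

theorem det_fromBlocks_mul_det_of_commute (A B : Matrix n n R) {C D : Matrix n n R}
    (hCD : Commute C D) : (fromBlocks A B C D).det * D.det = (A * D - B * C).det * D.det := by
  have hmul : fromBlocks A B C D * fromBlocks D 0 (-C) 1 = fromBlocks (A * D - B * C) B 0 D := by
    simp [fromBlocks_multiply, hCD.eq, sub_eq_add_neg]
  simpa using congrArg det hmul

-- Perturbing `D` to `X • 1 + D` over `R[X]` makes its determinant monic, hence cancellable.
theorem det_fromBlocks_of_commute (A B : Matrix n n R) {C D : Matrix n n R}
    (hCD : Commute C D) : (fromBlocks A B C D).det = (A * D - B * C).det := by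
  let lift : Matrix n n R →+* Matrix n n (Polynomial R) := Polynomial.C.mapMatrix
  let DX : Matrix n n (Polynomial R) := (Polynomial.X : Polynomial R) • 1 + lift D
  have hDX : DX.det.Monic := Polynomial.leadingCoeff_det_X_one_add_C D
  have hcomm : Commute (lift C) DX :=
    ((Commute.one_right _).smul_right _).add_right (hCD.map lift)
  have hdet : (fromBlocks (lift A) (lift B) (lift C) DX).det =
      (lift A * DX - lift B * lift C).det :=
    hDX.isRegular.right (det_fromBlocks_mul_det_of_commute _ _ hcomm)
  have heval (N : Matrix n n R) : (Polynomial.evalRingHom 0).mapMatrix (lift N) = N := by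
    ext
    simp [lift]
  have hevalDX : (Polynomial.evalRingHom 0).mapMatrix DX = D := by
    ext
    simp [DX, lift]
  have hevalBlocks : (Polynomial.evalRingHom 0).mapMatrix
      (fromBlocks (lift A) (lift B) (lift C) DX) = fromBlocks A B C D := by
    rw [RingHom.mapMatrix_apply, fromBlocks_map]
    simp only [← RingHom.mapMatrix_apply, heval, hevalDX]
  simpa only [RingHom.map_det, map_sub, map_mul, heval, hevalDX, hevalBlocks] using
    congrArg (Polynomial.evalRingHom 0) hdet

theorem trace_smul_one_sub_mul_smul_one_sub (a b : R) (A B : Matrix n n R) :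
    ((a • 1 - A) * (b • 1 - B)).trace =
      Fintype.card n * (a * b) - a * B.trace - b * A.trace + (A * B).trace := by
  simp only [sub_mul, mul_sub, smul_mul_assoc, mul_smul_comm, one_mul, mul_one, trace_sub,
    trace_smul, trace_one, smul_eq_mul]
  ring

theorem det_smul_one_sub_fin_two (a : R) (A : Matrix (Fin 2) (Fin 2) R) :
    (a • 1 - A).det = a ^ 2 - a * A.trace + A.det := by
  simp only [det_fin_two, trace_fin_two, Matrix.sub_apply, Matrix.smul_apply, smul_eq_mul,
    one_apply_eq, one_apply_ne zero_ne_one, one_apply_ne one_ne_zero]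
  ring

theorem det_smul_one_sub_fromBlocks_fin_two {A B : Matrix (Fin 2) (Fin 2) R} {m : R}
    (hA : A.trace = 0) (hB : B.trace = 0) (hmA : A.det = -m) (hmB : B.det = -m) (w y g : R) :
    (w • 1 - fromBlocks (A + y • 1) (g • 1) (g • 1) (B - y • 1)).det =
      (w ^ 2 - (m + y ^ 2 + g ^ 2)) ^ 2 -
        (4 * m * y ^ 2 + 2 * m * g ^ 2 + g ^ 2 * (A * B).trace) := by
  have hblocks : w • 1 - fromBlocks (A + y • 1) (g • 1) (g • 1) (B - y • 1) =
      fromBlocks ((w - y) • 1 - A) (-g • 1) (-g • 1) ((w + y) • 1 - B) := by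
    rw [← fromBlocks_one, fromBlocks_smul, sub_eq_add_neg, fromBlocks_neg, fromBlocks_add]
    congr 1 <;> module
  have hcommute : Commute (-g • (1 : Matrix (Fin 2) (Fin 2) R)) ((w + y) • 1 - B) :=
    (Commute.one_left _).smul_left _
  calc (w • 1 - fromBlocks (A + y • 1) (g • 1) (g • 1) (B - y • 1)).det
      = (((w - y) • 1 - A) * ((w + y) • 1 - B) - g ^ 2 • 1).det := by
        rw [hblocks, det_fromBlocks_of_commute _ _ hcommute, smul_mul_smul_comm, one_mul,
          neg_mul_neg, sq]
    _ = (g ^ 2 • 1 - ((w - y) • 1 - A) * ((w + y) • 1 - B)).det := by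
        rw [← neg_sub, det_neg, Fintype.card_fin, neg_one_sq, one_mul]
    _ = (g ^ 2) ^ 2 - g ^ 2 * (2 * ((w - y) * (w + y)) + (A * B).trace) +
          ((w - y) ^ 2 - m) * ((w + y) ^ 2 - m) := by
        simp only [det_smul_one_sub_fin_two, det_mul, trace_smul_one_sub_mul_smul_one_sub, hA, hB,
          hmA, hmB, Fintype.card_fin, Nat.cast_ofNat, mul_zero, sub_zero, ← sub_eq_add_neg]
    _ = _ := by ring

end CommRing

/-- The traceless block `κ σ_z + g (cos θ σ_x - sin θ σ_y)`: the coupling of the two modes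
`e₀ⱼ, e₁ⱼ` at a fixed second index, with hopping amplitude `g` and phase `θ`. -/
noncomputable def hoppingBlock (κ g θ : ℂ) : Matrix (Fin 2) (Fin 2) ℂ :=
  !![κ, g * Complex.exp (Complex.I * θ); g * Complex.exp (-(Complex.I * θ)), -κ]

theorem trace_hoppingBlock (κ g θ : ℂ) : (hoppingBlock κ g θ).trace = 0 := by
  simp [hoppingBlock, trace_fin_two]

theorem det_hoppingBlock (κ g θ : ℂ) : (hoppingBlock κ g θ).det = -(κ ^ 2 + g ^ 2) := by
  have hphase : Complex.exp (Complex.I * θ) * Complex.exp (-(Complex.I * θ)) = 1 := by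
    rw [← Complex.exp_add, add_neg_cancel, Complex.exp_zero]
  rw [hoppingBlock, det_fin_two_of]
  linear_combination -g ^ 2 * hphase

theorem trace_hoppingBlock_mul (κ g θ φ : ℂ) :
    (hoppingBlock κ g θ * hoppingBlock κ g φ).trace =
      2 * κ ^ 2 + 2 * g ^ 2 * Complex.cos (θ - φ) := by
  have hcos : 2 * Complex.cos (θ - φ) =
      Complex.exp (Complex.I * θ) * Complex.exp (-(Complex.I * φ)) +
        Complex.exp (-(Complex.I * θ)) * Complex.exp (Complex.I * φ) := by
    rw [Complex.two_cos, ← Complex.exp_add, ← Complex.exp_add]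
    ring_nf
  simp only [hoppingBlock, mul_fin_two, trace_fin_two_of]
  linear_combination -g ^ 2 * hcos

/-- The effective matrix relative to its mean energy `1/2 + |κ|²`, as a `2 × 2` block matrix
indexed by the second index of `e₀₀, e₁₀, e₀₁, e₁₁`. The phases are `B k₂` and `-B (1 - k₂)`,
written in terms of `κ₂ = k₂ - 1/2`. -/
noncomputable def grushinBlocks (κ1 κ2 B γ : ℂ) : Matrix (Fin 2 ⊕ Fin 2) (Fin 2 ⊕ Fin 2) ℂ :=
  fromBlocks (hoppingBlock κ1 (γ / 2) (B * (κ2 + 1 / 2)) + κ2 • 1) ((γ / 2) • 1) ((γ / 2) • 1)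
    (hoppingBlock κ1 (γ / 2) (B * (κ2 - 1 / 2)) - κ2 • 1)

theorem det_smul_one_sub_grushinBlocks (w κ1 κ2 B γ : ℂ) :
    (w • 1 - grushinBlocks κ1 κ2 B γ).det =
      (w ^ 2 - (κ1 ^ 2 + κ2 ^ 2 + γ ^ 2 / 2)) ^ 2 -
        4 * (κ1 ^ 2 * κ2 ^ 2 + γ ^ 2 / 4 * (κ1 ^ 2 + κ2 ^ 2) +
          γ ^ 4 / 16 * ((1 + Complex.cos B) / 2)) := by
  rw [grushinBlocks, det_smul_one_sub_fromBlocks_fin_two (trace_hoppingBlock ..)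
    (trace_hoppingBlock ..) (det_hoppingBlock ..) (det_hoppingBlock ..), trace_hoppingBlock_mul,
    show B * (κ2 + 1 / 2) - B * (κ2 - 1 / 2) = B by ring]
  ring

/-- The identification of block indices with positions in the basis `e₀₀, e₁₀, e₀₁, e₁₁`:
`inl i` is `eᵢ₀` and `inr i` is `eᵢ₁`. -/
def modeEquiv : Fin 2 ⊕ Fin 2 ≃ Fin 4 := finSumFinEquiv

theorem grushinD_add_smul_grushinC (κ1 κ2 B γ : ℝ) :
    grushinD (κ1 + 1 / 2) (κ2 + 1 / 2) + ((γ : ℂ) / 2) • grushinC B (κ2 + 1 / 2) =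
      (1 / 2 + (κ1 ^ 2 + κ2 ^ 2) : ℂ) • 1 +
        reindexAlgEquiv ℂ ℂ modeEquiv (grushinBlocks κ1 κ2 B γ) := by
  have h00 : modeEquiv.symm 0 = .inl 0 := rfl
  have h10 : modeEquiv.symm 1 = .inl 1 := rfl
  have h01 : modeEquiv.symm 2 = .inr 0 := rfl
  have h11 : modeEquiv.symm 3 = .inr 1 := rfl
  ext i j
  fin_cases i <;> fin_cases j <;>
    simp [-mul_eq_mul_left_iff, grushinD, grushinC, grushinBlocks, hoppingBlock, h00, h10, h01,
      h11] <;>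
    ring_nf

theorem sq_sub_sq_sub_four_mul_eq_prod {c r : ℝ} (hr : 0 ≤ r) (hrc : 2 * √r ≤ c) (w : ℂ) :
    (w ^ 2 - c) ^ 2 - 4 * r =
      (w - √(c + 2 * √r)) * (w - √(c - 2 * √r)) * (w + √(c + 2 * √r)) * (w + √(c - 2 * √r)) := by
  have hinner : (√r : ℂ) ^ 2 = r := mod_cast Real.sq_sqrt hr
  have hplus : (√(c + 2 * √r) : ℂ) ^ 2 = c + 2 * √r :=
    mod_cast Real.sq_sqrt (by linarith [Real.sqrt_nonneg r])
  have hminus : (√(c - 2 * √r) : ℂ) ^ 2 = c - 2 * √r := mod_cast Real.sq_sqrt (sub_nonneg.2 hrc)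
  calc (w ^ 2 - c) ^ 2 - 4 * (r : ℂ)
      = (w ^ 2 - (c + 2 * √r)) * (w ^ 2 - (c - 2 * √r)) := by rw [← hinner]; ring
    _ = (w ^ 2 - (√(c + 2 * √r) : ℂ) ^ 2) * (w ^ 2 - (√(c - 2 * √r) : ℂ) ^ 2) := by
        rw [hplus, hminus]
    _ = _ := by ring

theorem innerRad_nonneg (γ κ1 κ2 δ : ℝ) : 0 ≤ innerRad γ κ1 κ2 δ := by
  unfold innerRad
  positivity

theorem two_mul_sqrt_innerRad_le (γ κ1 κ2 δ : ℝ) :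
    2 * √(innerRad γ κ1 κ2 δ) ≤ κ1 ^ 2 + κ2 ^ 2 + γ ^ 2 / 2 := by
  have hgap : (κ1 ^ 2 + κ2 ^ 2 + γ ^ 2 / 2) ^ 2 - 4 * innerRad γ κ1 κ2 δ =
      (κ1 ^ 2 - κ2 ^ 2) ^ 2 + γ ^ 4 / 4 * Real.cos (δ / 2) ^ 2 := by
    rw [innerRad, Real.sin_sq]
    ring
  have hgap_nonneg : 0 ≤ (κ1 ^ 2 - κ2 ^ 2) ^ 2 + γ ^ 4 / 4 * Real.cos (δ / 2) ^ 2 := by positivity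
  rw [← sq_le_sq₀ (by positivity) (by positivity), mul_pow, Real.sq_sqrt (innerRad_nonneg ..)]
  linarith

theorem sin_sq_half_sub_odd_mul_pi (B : ℝ) (ℓ : ℤ) :
    Real.sin ((B - (2 * ℓ + 1) * π) / 2) ^ 2 = (1 + Real.cos B) / 2 := by
  have hcos : Real.cos (2 * ((B - (2 * ℓ + 1) * π) / 2)) = -Real.cos B := by
    rw [← Real.cos_sub_pi, ← Real.cos_sub_int_mul_two_pi (B - π) ℓ]
    ring_nf
  rw [Real.sin_sq_eq_half_sub, hcos]
  ring

theorem prod_sub_zEig (γ κ1 κ2 δ : ℝ) (z : ℂ) :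
    (z - zEig γ κ1 κ2 δ 1 1) * (z - zEig γ κ1 κ2 δ 1 (-1)) *
        (z - zEig γ κ1 κ2 δ (-1) 1) * (z - zEig γ κ1 κ2 δ (-1) (-1)) =
      ((z - (1 / 2 + (κ1 ^ 2 + κ2 ^ 2))) ^ 2 - (κ1 ^ 2 + κ2 ^ 2 + γ ^ 2 / 2)) ^ 2 -
        4 * innerRad γ κ1 κ2 δ := by
  have hfactor := sq_sub_sq_sub_four_mul_eq_prod (innerRad_nonneg γ κ1 κ2 δ)
    (two_mul_sqrt_innerRad_le γ κ1 κ2 δ) (z - (1 / 2 + (κ1 ^ 2 + κ2 ^ 2)))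
  push_cast at hfactor
  rw [hfactor]
  simp only [zEig, mul_one, mul_neg, neg_mul, ← sub_eq_add_neg]
  push_cast
  ring

/-- Exact eigenvalue computation for the `4×4` Grushin effective matrix
`M = D + (γ/2) C`: with `κ = k - (1/2,1/2)` and `δ = B - (2ℓ+1)π`, the
radicand with `s₂ = -1` is nonnegative, and the characteristic polynomial of
`M` factors through the four real branches `zEig γ κ₁ κ₂ δ s₁ s₂`,
`s₁, s₂ ∈ {±1}`. -/
theorem grushin_matrix_eigenvalues (k1 k2 B γ : ℝ) (ℓ : ℤ)
    (κ1 κ2 δ : ℝ) (hκ1 : κ1 = k1 - 1 / 2) (hκ2 : κ2 = k2 - 1 / 2)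
    (hδ : δ = B - (2 * (ℓ : ℝ) + 1) * Real.pi) :
    0 ≤ (κ1 ^ 2 + κ2 ^ 2) + γ ^ 2 / 2 - 2 * Real.sqrt (innerRad γ κ1 κ2 δ) ∧
    ∀ z : ℂ,
      (z • (1 : Matrix (Fin 4) (Fin 4) ℂ)
          - (grushinD k1 k2 + ((γ : ℂ) / 2) • grushinC B k2)).det
        = (z - ((zEig γ κ1 κ2 δ 1 1 : ℝ) : ℂ))
          * (z - ((zEig γ κ1 κ2 δ 1 (-1) : ℝ) : ℂ))
          * (z - ((zEig γ κ1 κ2 δ (-1) 1 : ℝ) : ℂ))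
          * (z - ((zEig γ κ1 κ2 δ (-1) (-1) : ℝ) : ℂ)) := by
  obtain rfl : k1 = κ1 + 1 / 2 := by rw [hκ1, sub_add_cancel]
  obtain rfl : k2 = κ2 + 1 / 2 := by rw [hκ2, sub_add_cancel]
  refine ⟨sub_nonneg.2 (two_mul_sqrt_innerRad_le γ κ1 κ2 δ), fun z => ?_⟩
  calc
    _ = ((z - (1 / 2 + (κ1 ^ 2 + κ2 ^ 2))) • 1 - grushinBlocks κ1 κ2 B γ).det := by
      rw [← det_reindexAlgEquiv ℂ ℂ modeEquiv, map_sub, map_smul, map_one,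
        grushinD_add_smul_grushinC, sub_smul, sub_sub]
    _ = ((z - (1 / 2 + (κ1 ^ 2 + κ2 ^ 2))) ^ 2 - (κ1 ^ 2 + κ2 ^ 2 + γ ^ 2 / 2)) ^ 2 -
          4 * innerRad γ κ1 κ2 δ := by
      rw [det_smul_one_sub_grushinBlocks, innerRad, hδ, sin_sq_half_sub_odd_mul_pi]
      push_cast
      rfl
    _ = _ := (prod_sub_zEig γ κ1 κ2 δ z).symm
end
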